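/- Let Δ be a locally strongly connected abstract simplicial complex of finite dimension d and let σ0 be a facet of Δ. Then Δ is balanced if and only if the group of projectivities Π(Δ,σ0) is trivial. -/

import Mathlib

/-- An abstract simplicial complex on the vertex set `V`: a nonempty collection of finite
subsets of `V` (the faces) which is closed under taking subsets. -/
structure ASC (V : Type*) where
  faces : Set (Finset V)
  faces_nonempty : faces.Nonempty
  down_closed : ∀ {σ τ : Finset V}, σ ∈ faces → τ ⊆ σ → τ ∈ faces

namespace ASC

variable {V : Type*} [DecidableEq V]

/-- Two facets are adjacent if they share a common ridge, i.e. they have the same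
cardinality and differ in exactly one vertex. -/
def Adj (σ τ : Finset V) : Prop :=
  σ ≠ τ ∧ σ.card = τ.card ∧ (σ \ τ).card = 1

/-- A facet: an inclusion-maximal face. -/
def IsFacet (Δ : ASC V) (σ : Finset V) : Prop :=
  σ ∈ Δ.faces ∧ ∀ τ ∈ Δ.faces, σ ⊆ τ → σ = τ

/-- The perspectivity from `σ` to `τ` as a map on vertices: it sends the unique vertex of
`σ \ τ` to the unique vertex of `τ \ σ` and fixes all other vertices. -/
noncomputable def perspMap (σ τ : Finset V) : V → V := fun x =>
  if x ∈ σ \ τ then ((τ \ σ).toList.head?.getD x) else x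

/-- The projectivity along a facet path, as a map on vertices (the composition of the
consecutive perspectivities, rightmost, i.e. first perspectivity, applied first). -/
noncomputable def projMap : List (Finset V) → V → V
  | [] => id
  | [_] => id
  | σ :: τ :: rest => (projMap (τ :: rest)) ∘ (perspMap σ τ)

/-- `L` is a facet path in `Δ` from `σ` to `τ`. -/
def IsFacetPath (Δ : ASC V) (L : List (Finset V)) (σ τ : Finset V) : Prop :=
  L ≠ [] ∧ L.head? = some σ ∧ L.getLast? = some τ ∧
    (∀ s ∈ L, Δ.IsFacet s) ∧ L.Chain' Adj

/-- The permutation `π` of the facet `σ0` is the projectivity along the facet path `L`. -/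
def Represents (σ0 : Finset V) (π : Equiv.Perm {x // x ∈ σ0}) (L : List (Finset V)) : Prop :=
  ∀ x : {x // x ∈ σ0}, (π x).1 = projMap L x.1

/-- The group of projectivities of `Δ` at the facet `σ0`: the subgroup of `Sym σ0`
consisting of the projectivities along all facet loops based at `σ0`. -/
def ProjGroup (Δ : ASC V) (σ0 : Finset V) : Subgroup (Equiv.Perm {x // x ∈ σ0}) :=
  Subgroup.closure {π | ∃ L, Δ.IsFacetPath L σ0 σ0 ∧ Represents σ0 π L}

end ASC

open ASC

variable {V : Type*} [DecidableEq V]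

/-- `Δ` is strongly connected: any two facets are joined by a facet path. -/
def StronglyConnected (Δ : ASC V) : Prop :=
  ∀ σ τ : Finset V, Δ.IsFacet σ → Δ.IsFacet τ → ∃ L, Δ.IsFacetPath L σ τ

/-- `Δ` is locally strongly connected: it is strongly connected and the star of every
vertex is strongly connected (any two facets containing a vertex `v` are joined by a
facet path all of whose facets contain `v`). -/
def LocallyStronglyConnected (Δ : ASC V) : Prop :=
  StronglyConnected Δ ∧
    ∀ v : V, ({v} : Finset V) ∈ Δ.faces →
      ∀ σ τ : Finset V, Δ.IsFacet σ → Δ.IsFacet τ → v ∈ σ → v ∈ τ →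
        ∃ L, Δ.IsFacetPath L σ τ ∧ ∀ s ∈ L, v ∈ s

/-- A `d`-dimensional complex is balanced if its vertices admit a proper coloring with
`d + 1` colors. -/
def IsBalanced (Δ : ASC V) (d : ℕ) : Prop :=
  ∃ c : V → Fin (d + 1), ∀ x y : V, ({x, y} : Finset V) ∈ Δ.faces → x ≠ y → c x ≠ c y

theorem adj_data {σ τ : Finset V} (h : Adj σ τ) :
    ∃ a b, a ∈ σ ∧ a ∉ τ ∧ b ∈ τ ∧ b ∉ σ ∧ (∀ x ∈ σ, x ≠ a → x ∈ τ) ∧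
      (∀ x ∈ τ, x ≠ b → x ∈ σ) ∧ (∀ x, perspMap σ τ x = if x = a then b else x) ∧
      (∀ x, perspMap τ σ x = if x = b then a else x) := by
  obtain ⟨_, hc, h1⟩ := h
  have h2 : (τ \ σ).card = 1 := by
    have e1 := Finset.card_sdiff_add_card_inter σ τ
    have e2 := Finset.card_sdiff_add_card_inter τ σ
    rw [Finset.inter_comm τ σ] at e2
    omega
  obtain ⟨a, ha⟩ := Finset.card_eq_one.mp h1
  obtain ⟨b, hb⟩ := Finset.card_eq_one.mp h2
  have ha' : ∀ x, x ∈ σ ∧ x ∉ τ ↔ x = a := fun x => by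
    rw [← Finset.mem_sdiff, ha, Finset.mem_singleton]
  have hb' : ∀ x, x ∈ τ ∧ x ∉ σ ↔ x = b := fun x => by
    rw [← Finset.mem_sdiff, hb, Finset.mem_singleton]
  refine ⟨a, b, ((ha' a).2 rfl).1, ((ha' a).2 rfl).2, ((hb' b).2 rfl).1, ((hb' b).2 rfl).2,
    ?_, ?_, ?_, ?_⟩
  · intro x hx hxa
    by_contra hn
    exact hxa ((ha' x).1 ⟨hx, hn⟩)
  · intro x hx hxa
    by_contra hn
    exact hxa ((hb' x).1 ⟨hx, hn⟩)
  · intro x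
    simp [perspMap, ha, hb]
  · intro x
    simp [perspMap, ha, hb]

theorem Adj_symm' {σ τ : Finset V} (h : Adj σ τ) : Adj τ σ := by
  obtain ⟨hn, hc, h1⟩ := h
  refine ⟨hn.symm, hc.symm, ?_⟩
  have e1 := Finset.card_sdiff_add_card_inter σ τ
  have e2 := Finset.card_sdiff_add_card_inter τ σ
  rw [Finset.inter_comm τ σ] at e2
  omega

theorem persp_mem {σ τ : Finset V} (h : Adj σ τ) {x : V} (hx : x ∈ σ) : perspMap σ τ x ∈ τ := by
  obtain ⟨a, b, ha, ha', hb, hb', h1, h2, h3, h4⟩ := adj_data h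
  rw [h3]; split_ifs with hxa
  · exact hb
  · exact h1 x hx hxa

theorem persp_inv {σ τ : Finset V} (h : Adj σ τ) {x : V} (hx : x ∈ σ) :
    perspMap τ σ (perspMap σ τ x) = x := by
  obtain ⟨a, b, ha, ha', hb, hb', h1, h2, h3, h4⟩ := adj_data h
  rw [h3, h4]
  by_cases hxa : x = a
  · simp [hxa]
  · rw [if_neg hxa, if_neg]
    rintro rfl
    exact hb' hx

theorem persp_fix {σ τ : Finset V} {x : V} (hx : x ∈ τ) : perspMap σ τ x = x := by
  simp [perspMap, hx]

/-- `f` is the projectivity along some facet path from the first facet to the second. -/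
inductive IsProj (Δ : ASC V) : Finset V → Finset V → (V → V) → Prop
  | refl (σ : Finset V) (h : Δ.IsFacet σ) : IsProj Δ σ σ id
  | cons (σ τ ρ : Finset V) (g : V → V) (h : Δ.IsFacet σ) (ha : Adj σ τ)
      (hg : IsProj Δ τ ρ g) : IsProj Δ σ ρ (g ∘ perspMap σ τ)

theorem IsProj.of_path {Δ : ASC V} : ∀ (L : List (Finset V)) (σ τ : Finset V),
    Δ.IsFacetPath L σ τ → IsProj Δ σ τ (projMap L)
  | [], _, _, h => absurd rfl h.1
  | [ρ], σ, τ, h => by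
    obtain ⟨_, h1, h2, h3, _⟩ := h
    simp at h1 h2 h3
    subst h1; subst h2
    exact IsProj.refl _ h3
  | ρ :: ρ' :: rest, σ, τ, h => by
    obtain ⟨_, h1, h2, h3, h4⟩ := h
    have h1 : ρ = σ := by simpa using h1
    subst h1
    have h4' := List.isChain_cons_cons.mp h4
    refine IsProj.cons _ ρ' _ _ (h3 _ (by simp)) h4'.1 (IsProj.of_path _ _ _ ?_)
    refine ⟨by simp, by simp, ?_, fun s hs => h3 s (List.mem_cons_of_mem _ hs), h4'.2⟩
    rw [← h2, List.getLast?_cons_cons]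

theorem IsProj.to_path {Δ : ASC V} {σ τ : Finset V} {f : V → V} (h : IsProj Δ σ τ f) :
    ∃ L, Δ.IsFacetPath L σ τ ∧ projMap L = f := by
  induction h with
  | refl σ h => exact ⟨[σ], ⟨by simp, by simp, by simp, by simpa using h, List.isChain_singleton _⟩, rfl⟩
  | cons σ τ ρ g h ha hg ih =>
    obtain ⟨L, ⟨h0, h1, h2, h3, h4⟩, rfl⟩ := ih
    match L, h0 with
    | ρ' :: rest, _ =>
      have h1 : ρ' = τ := by simpa using h1
      subst h1
      refine ⟨σ :: ρ' :: rest, ⟨by simp, by simp, ?_, ?_, List.isChain_cons_cons.mpr ⟨ha, h4⟩⟩, rfl⟩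
      · rw [← h2, List.getLast?_cons_cons]
      · intro s hs
        rcases List.mem_cons.mp hs with rfl | hs
        · exact h
        · exact h3 s hs

theorem IsProj.trans {Δ : ASC V} {σ τ ρ : Finset V} {f g : V → V} (h : IsProj Δ σ τ f)
    (h' : IsProj Δ τ ρ g) : IsProj Δ σ ρ (g ∘ f) := by
  induction h with
  | refl σ h => exact h'
  | cons σ τ ρ k h ha hg ih => exact IsProj.cons _ _ _ _ h ha (ih h')

theorem IsProj.left {Δ : ASC V} {σ τ : Finset V} {f : V → V} (h : IsProj Δ σ τ f) :
    Δ.IsFacet σ := by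
  cases h <;> assumption

theorem IsProj.card {Δ : ASC V} {σ τ : Finset V} {f : V → V} (h : IsProj Δ σ τ f) :
    σ.card = τ.card := by
  induction h with
  | refl σ h => rfl
  | cons σ τ ρ k h ha hg ih => exact ha.2.1.trans ih

theorem IsProj.mem {Δ : ASC V} {σ τ : Finset V} {f : V → V} (h : IsProj Δ σ τ f) :
    ∀ x ∈ σ, f x ∈ τ := by
  induction h with
  | refl σ h => exact fun x hx => hx
  | cons σ τ ρ k h ha hg ih => exact fun x hx => ih _ (persp_mem ha hx)

theorem IsProj.symm {Δ : ASC V} {σ τ : Finset V} {f : V → V} (h : IsProj Δ σ τ f) :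
    ∃ g, IsProj Δ τ σ g ∧ ∀ x ∈ σ, g (f x) = x := by
  induction h with
  | refl σ h => exact ⟨id, IsProj.refl _ h, fun _ _ => rfl⟩
  | cons σ τ ρ k h ha hg ih =>
    obtain ⟨g, h1, h2⟩ := ih
    refine ⟨perspMap τ σ ∘ g, h1.trans
      (IsProj.cons τ σ σ id hg.left (Adj_symm' ha) (IsProj.refl σ h)), fun x hx => ?_⟩
    simp only [Function.comp]
    rw [h2 _ (persp_mem ha hx), persp_inv ha hx]

theorem projMap_fix {v : V} : ∀ L : List (Finset V), (∀ s ∈ L, v ∈ s) → projMap L v = v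
  | [], _ => rfl
  | [_], _ => rfl
  | σ :: τ :: rest, h => by
    change projMap (τ :: rest) (perspMap σ τ v) = v
    rw [persp_fix (h τ (by simp))]
    exact projMap_fix _ (fun s hs => h s (List.mem_cons_of_mem _ hs))

theorem IsProj.loop_eq {Δ : ASC V} {σ : Finset V} {f : V → V} (h : IsProj Δ σ σ f)
    (ht : Δ.ProjGroup σ = ⊥) : ∀ x ∈ σ, f x = x := by
  obtain ⟨g, hg, hgf⟩ := h.symm
  let F : {x // x ∈ σ} → {x // x ∈ σ} := fun x => ⟨f x.1, h.mem _ x.2⟩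
  have hF : Function.Injective F := by
    intro x y hxy
    have : f x.1 = f y.1 := congrArg Subtype.val hxy
    apply Subtype.ext
    rw [← hgf x.1 x.2, ← hgf y.1 y.2, this]
  let π : Equiv.Perm {x // x ∈ σ} := Equiv.ofBijective F (Finite.injective_iff_bijective.mp hF)
  have hπ : π ∈ Δ.ProjGroup σ := by
    apply Subgroup.subset_closure
    obtain ⟨L, hL, rfl⟩ := h.to_path
    exact ⟨L, hL, fun x => rfl⟩
  rw [ht, Subgroup.mem_bot] at hπ
  intro x hx
  have := congrArg Subtype.val (congrArg (fun p : Equiv.Perm {x // x ∈ σ} => p ⟨x, hx⟩) hπ)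
  exact this

theorem IsProj.unique {Δ : ASC V} {σ τ : Finset V} {f g : V → V} (hf : IsProj Δ τ σ f)
    (hg : IsProj Δ τ σ g) (ht : Δ.ProjGroup σ = ⊥) : ∀ x ∈ τ, f x = g x := by
  obtain ⟨k, hk, hkf⟩ := hf.symm
  intro x hx
  have := (hk.trans hg).loop_eq ht (f x) (hf.mem x hx)
  simp only [Function.comp, hkf x hx] at this
  exact this.symm

theorem exists_facet (Δ : ASC V) (d : ℕ) (hd : ∀ σ ∈ Δ.faces, σ.card ≤ d + 1) :
    ∀ (n : ℕ) (s : Finset V), s ∈ Δ.faces → d + 1 - s.card = n → ∃ σ, Δ.IsFacet σ ∧ s ⊆ σ := by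
  intro n
  induction n using Nat.strong_induction_on with
  | _ n ih =>
    intro s hs hn
    by_cases hf : Δ.IsFacet s
    · exact ⟨s, hf, subset_rfl⟩
    · have : ∃ τ ∈ Δ.faces, s ⊆ τ ∧ s ≠ τ := by
        by_contra hcon
        apply hf
        refine ⟨hs, fun τ hτ hsub => ?_⟩
        by_contra hne
        exact hcon ⟨τ, hτ, hsub, hne⟩
      obtain ⟨τ, hτ, hsub, hne⟩ := this
      have hlt := Finset.card_lt_card (hsub.ssubset_of_ne hne)
      have hle := hd τ hτ
      obtain ⟨σ, h1, h2⟩ := ih (d + 1 - τ.card) (by omega) τ hτ rfl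
      exact ⟨σ, h1, hsub.trans h2⟩

theorem color_proj {Δ : ASC V} {d : ℕ} (hcard : ∀ σ, Δ.IsFacet σ → σ.card = d + 1)
    (c : V → Fin (d + 1)) (hc : ∀ x y : V, ({x, y} : Finset V) ∈ Δ.faces → x ≠ y → c x ≠ c y)
    {σ τ : Finset V} {f : V → V} (h : IsProj Δ σ τ f) : ∀ x ∈ σ, c (f x) = c x := by
  have hinj : ∀ σ, Δ.IsFacet σ → ∀ x ∈ σ, ∀ y ∈ σ, c x = c y → x = y := by
    intro σ hσ x hx y hy hxy
    by_contra hne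
    refine hc x y (Δ.down_closed hσ.1 ?_) hne hxy
    intro z hz
    rcases Finset.mem_insert.mp hz with rfl | hz
    · exact hx
    · rw [Finset.mem_singleton.mp hz]; exact hy
  induction h with
  | refl σ h => exact fun _ _ => rfl
  | cons σ τ ρ k h ha hg ih =>
    intro x hx
    simp only [Function.comp]
    rw [ih _ (persp_mem ha hx)]
    obtain ⟨a, b, ha1, ha2, hb, hb', h1, h2, h3, h4⟩ := adj_data ha
    rw [h3]
    split_ifs with hxa
    · subst hxa
      have him : τ.image c = Finset.univ := by
        apply Finset.eq_univ_of_card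
        rw [Finset.card_image_of_injOn (fun x hx y hy hxy => hinj τ hg.left x hx y hy hxy),
          hcard τ hg.left, Fintype.card_fin]
      obtain ⟨y, hy, hyx⟩ := Finset.mem_image.mp (him ▸ Finset.mem_univ (c x))
      by_cases hyb : y = b
      · rw [← hyb, hyx]
      · exact absurd (hinj σ h y (h2 y hy hyb) x hx hyx ▸ hy) ha2
    · rfl

/-- **Proposition (balanced)**: a locally strongly connected `d`-dimensional simplicial
complex is balanced iff its group of projectivities is trivial. -/
theorem balanced_iff_projGroup_trivial (Δ : ASC V) (d : ℕ)
    (hdim : (∀ σ ∈ Δ.faces, σ.card ≤ d + 1) ∧ ∃ σ ∈ Δ.faces, σ.card = d + 1)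
    (hlsc : LocallyStronglyConnected Δ)
    (σ0 : Finset V) (hσ0 : Δ.IsFacet σ0) :
    IsBalanced Δ d ↔ Δ.ProjGroup σ0 = ⊥ := by
  obtain ⟨hd, σ1, hσ1, hσ1c⟩ := hdim
  obtain ⟨hsc, hstar⟩ := hlsc
  constructor
  · rintro ⟨c, hc⟩
    have hf1 : Δ.IsFacet σ1 :=
      ⟨hσ1, fun τ hτ hsub => Finset.eq_of_subset_of_card_le hsub (by rw [hσ1c]; exact hd τ hτ)⟩
    have hcard : ∀ σ, Δ.IsFacet σ → σ.card = d + 1 := by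
      intro σ hσ
      obtain ⟨L, hL⟩ := hsc σ σ1 hσ hf1
      rw [(IsProj.of_path L _ _ hL).card, hσ1c]
    rw [ASC.ProjGroup, Subgroup.closure_eq_bot_iff]
    rintro π ⟨L, hL, hπ⟩
    rw [Set.mem_singleton_iff]
    ext x
    have hcol := color_proj hcard c hc (IsProj.of_path L _ _ hL) x.1 x.2
    rw [← hπ x] at hcol
    by_contra hne
    refine hc (π x).1 x.1 (Δ.down_closed hσ0.1 ?_) hne hcol
    intro z hz
    rcases Finset.mem_insert.mp hz with rfl | hz
    · exact (π x).2
    · rw [Finset.mem_singleton.mp hz]; exact x.2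
  · intro ht
    have hP : ∀ τ, Δ.IsFacet τ → ∃ f, IsProj Δ τ σ0 f := by
      intro τ hτ
      obtain ⟨L, hL⟩ := hsc τ σ0 hτ hσ0
      exact ⟨_, IsProj.of_path L _ _ hL⟩
    have he : ∃ e : V → Fin (d + 1), ∀ x ∈ σ0, ∀ y ∈ σ0, e x = e y → x = y := by
      let e0 := σ0.equivFin
      refine ⟨fun x => if hx : x ∈ σ0 then Fin.castLE (hd σ0 hσ0.1) (e0 ⟨x, hx⟩) else 0, ?_⟩
      intro x hx y hy hxy
      simp only [dif_pos hx, dif_pos hy] at hxy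
      exact congrArg Subtype.val (e0.injective (Fin.castLE_injective _ hxy))
    obtain ⟨e, he⟩ := he
    have hcol : ∀ v : V, ∃ k : Fin (d + 1), ∀ τ f, v ∈ τ → IsProj Δ τ σ0 f → e (f v) = k := by
      intro v
      by_cases hv : ∃ τ, Δ.IsFacet τ ∧ v ∈ τ
      · obtain ⟨τ, hτ, hvτ⟩ := hv
        obtain ⟨f, hf⟩ := hP τ hτ
        refine ⟨e (f v), fun τ' f' hv' hf' => ?_⟩
        obtain ⟨L, hL, hLv⟩ := hstar v (Δ.down_closed hτ.1 (Finset.singleton_subset_iff.mpr hvτ))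
          τ τ' hτ hf'.left hvτ hv'
        have := ((IsProj.of_path L _ _ hL).trans hf').unique hf ht v hvτ
        simp only [Function.comp, projMap_fix L hLv] at this
        rw [this]
      · exact ⟨0, fun τ f hvτ hf => absurd ⟨τ, hf.left, hvτ⟩ hv⟩
    choose c hc using hcol
    refine ⟨c, fun x y hxy hne hcxy => ?_⟩
    obtain ⟨τ, hτ, hsub⟩ := exists_facet Δ d hd _ _ hxy rfl
    have hx : x ∈ τ := hsub (by simp)
    have hy : y ∈ τ := hsub (by simp)
    obtain ⟨f, hf⟩ := hP τ hτ
    rw [← hc x τ f hx hf, ← hc y τ f hy hf] at hcxy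
    have hfe := he _ (hf.mem x hx) _ (hf.mem y hy) hcxy
    obtain ⟨g, _, hg⟩ := hf.symm
    exact hne (by rw [← hg x hx, ← hg y hy, hfe])
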